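/- Assume (Φ1) with exponent k ∈ (−1/2, 3/2), and let P := P_Φ := h ∘ (g|_{[0,∞)})⁻¹ be the induced macroscopic equation of state. Set γ := 1/(k + 3/2), so γ ∈ (1/3, 1). Then there exist constants c₁, c₂ > 0 such that for all sufficiently small ρ > 0: c₁ ρ^{γ} ≤ P′(ρ) ≤ c₂ ρ^{γ} and c₁ ρ^{γ+1} ≤ P(ρ) ≤ c₂ ρ^{γ+1}. In particular P′(ρ) ≤ c ρ^{1/n} for sufficiently small ρ > 0, with n := k + 3/2 ∈ (1, 3). -/

import Mathlib

open MeasureTheory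

noncomputable section

/-- The macroscopic energy density `g(y)` induced by the microscopic ansatz `Φ` (extended by
`0` for `y ≤ 0`). -/
def gfun (Φ : ℝ → ℝ) (y : ℝ) : ℝ :=
  if y ≤ 0 then 0 else
    4 * Real.pi * Real.exp (4 * y) *
      ∫ η in (0:ℝ)..(1 - Real.exp (-y)),
        Φ η * (1 - η) ^ 2 * Real.sqrt ((1 - η) ^ 2 - Real.exp (-2 * y))

/-- The macroscopic pressure `h(y)` induced by the microscopic ansatz `Φ` (extended by `0` for
`y ≤ 0`). -/
def hfun (Φ : ℝ → ℝ) (y : ℝ) : ℝ :=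
  if y ≤ 0 then 0 else
    4 * Real.pi / 3 * Real.exp (4 * y) *
      ∫ η in (0:ℝ)..(1 - Real.exp (-y)),
        Φ η * Real.sqrt ((1 - η) ^ 2 - Real.exp (-2 * y)) ^ 3

/-
Under `δ = 1 - e^{-y}`, both `g` and `h` become, up to a factor `e^{4y}`, Abel-type integrals
`A_p(δ) = ∫₀^δ φ(η) ((1 - η)² - (1 - δ)²)^p dη` with `p = 1/2` and `p = 3/2`. The kernel is
comparable to `(δ - η)^p`, so by scaling `φ ≍ η^k` gives `A_p ≍ δ^{k+p+1}`. Moreover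
`A_p' = 2p (1 - δ) A_{p-1}`: for `p = 1/2` by differentiating under the integral, and for `p = 3/2`
because expanding one factor of the kernel expresses `A_{3/2}` through two integrals with `p = 1/2`.
Hence `g ≍ y^{k+3/2}`, `h ≍ y^{k+5/2}`, and each derivative has order one lower. Inverting `g` near
`0`, the functions `P = h ∘ g⁻¹` and `P' = (h'/g') ∘ g⁻¹` have the orders `(k + 5/2)/(k + 3/2)` and
`1/(k + 3/2)`.
-/

section

open Set Filter Topology Asymptotics

section Asymptotics

theorem isTheta_one_of_tendsto {α 𝕜 : Type*} [NormedField 𝕜] {l : Filter α} {f : α → 𝕜} {c : 𝕜}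
    (hc : c ≠ 0) (h : Tendsto f l (𝓝 c)) : f =Θ[l] fun _ => (1 : 𝕜) :=
  (isTheta_of_div_tendsto_nhds_ne_zero (f := fun _ => (1 : 𝕜)) (by simpa using h) hc).symm

theorem tendsto_rpow_nhdsGT_zero {r : ℝ} (hr : 0 < r) :
    Tendsto (fun x : ℝ => x ^ r) (𝓝[>] 0) (𝓝 0) := by
  simpa [Real.zero_rpow hr.ne'] using
    (Real.continuousAt_rpow_const 0 r (Or.inr hr.le)).tendsto.mono_left nhdsWithin_le_nhds

theorem isLittleO_rpow_rpow_nhdsGT_zero {r s : ℝ} (hsr : s < r) :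
    (fun x : ℝ => x ^ r) =o[𝓝[>] 0] fun x => x ^ s := by
  refine isLittleO_of_tendsto' ?_ ?_
  · filter_upwards [self_mem_nhdsWithin] with x hx h0
    exact absurd h0 (Real.rpow_pos_of_pos hx s).ne'
  · refine (tendsto_rpow_nhdsGT_zero (sub_pos.2 hsr)).congr' ?_
    filter_upwards [self_mem_nhdsWithin] with x hx using Real.rpow_sub hx r s

end Asymptotics

/-- `f` is comparable to the power `x ^ r` from above and below as `x → 0⁺`: the relation
`c₁ x ^ r ≤ f x ≤ c₂ x ^ r` for small `x > 0` in which assumption (Φ1) and the asserted asymptotics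
are phrased. Unlike `f =Θ[𝓝[>] 0] fun x => x ^ r` it includes the sign of `f`. -/
def HasRpowOrder (f : ℝ → ℝ) (r : ℝ) : Prop :=
  ∃ c₁ > 0, ∃ c₂ > 0, ∀ᶠ x in 𝓝[>] 0, c₁ * x ^ r ≤ f x ∧ f x ≤ c₂ * x ^ r

namespace HasRpowOrder

variable {f g u : ℝ → ℝ} {c r s : ℝ}

theorem eventually_pos (hf : HasRpowOrder f r) : ∀ᶠ x in 𝓝[>] 0, 0 < f x := by
  obtain ⟨c₁, hc₁, _, _, h⟩ := hf
  filter_upwards [h, self_mem_nhdsWithin] with x hfx hx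
  exact (mul_pos hc₁ (Real.rpow_pos_of_pos hx r)).trans_le hfx.1

theorem isTheta (hf : HasRpowOrder f r) : f =Θ[𝓝[>] 0] fun x => x ^ r := by
  have hpos := hf.eventually_pos
  obtain ⟨c₁, hc₁, c₂, -, h⟩ := hf
  refine ⟨IsBigO.of_bound c₂ ?_, IsBigO.of_bound c₁⁻¹ ?_⟩ <;>
    filter_upwards [hpos, h, self_mem_nhdsWithin] with x hfx ⟨hlow, hup⟩ hx <;>
    rw [Real.norm_of_nonneg hfx.le, Real.norm_of_nonneg (Real.rpow_pos_of_pos hx r).le]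
  · exact hup
  · exact (le_inv_mul_iff₀ hc₁).2 hlow

theorem of_isTheta (hnonneg : ∀ᶠ x in 𝓝[>] 0, 0 ≤ f x) (hf : f =Θ[𝓝[>] 0] fun x => x ^ r) :
    HasRpowOrder f r := by
  obtain ⟨c₂, hc₂, hup⟩ := hf.1.exists_pos
  obtain ⟨C, hC, hlow⟩ := hf.2.exists_pos
  refine ⟨C⁻¹, inv_pos.2 hC, c₂, hc₂, ?_⟩
  filter_upwards [hnonneg, hup.bound, hlow.bound, self_mem_nhdsWithin] with x hfx hup hlow hx
  rw [Real.norm_of_nonneg hfx, Real.norm_of_nonneg (Real.rpow_pos_of_pos hx r).le] at hup hlow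
  exact ⟨(inv_mul_le_iff₀ hC).2 hlow, hup⟩

theorem congr' (hf : HasRpowOrder f r) (hfg : f =ᶠ[𝓝[>] 0] g) : HasRpowOrder g r :=
  of_isTheta ((hf.eventually_pos.and hfg).mono fun _ h => h.2 ▸ h.1.le)
    (hfg.symm.trans_isTheta hf.isTheta)

theorem mul_of_tendsto (hf : HasRpowOrder f r) (hc : 0 < c) (hu : Tendsto u (𝓝[>] 0) (𝓝 c)) :
    HasRpowOrder (fun x => u x * f x) r := by
  refine of_isTheta ?_ ?_
  · filter_upwards [hf.eventually_pos, hu.eventually_const_lt hc] with x hfx hux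
    exact (mul_pos hux hfx).le
  · simpa only [one_mul] using (isTheta_one_of_tendsto hc.ne' hu).mul hf.isTheta

theorem const_mul (hf : HasRpowOrder f r) (hc : 0 < c) : HasRpowOrder (fun x => c * f x) r :=
  hf.mul_of_tendsto hc tendsto_const_nhds

theorem add (hf : HasRpowOrder f r) (hg : HasRpowOrder g s) (hsr : s < r) :
    HasRpowOrder (fun x => f x + g x) s := by
  refine of_isTheta ?_
    ((hf.isTheta.1.trans_isLittleO (isLittleO_rpow_rpow_nhdsGT_zero hsr)).add_isTheta hg.isTheta)
  filter_upwards [hf.eventually_pos, hg.eventually_pos] with x hfx hgx using (add_pos hfx hgx).le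

theorem div (hf : HasRpowOrder f r) (hg : HasRpowOrder g s) :
    HasRpowOrder (fun x => f x / g x) (r - s) := by
  refine of_isTheta ?_ ((hf.isTheta.div hg.isTheta).trans_eventuallyEq ?_)
  · filter_upwards [hf.eventually_pos, hg.eventually_pos] with x hfx hgx using (div_pos hfx hgx).le
  · filter_upwards [self_mem_nhdsWithin] with x hx using (Real.rpow_sub hx r s).symm

theorem rpow_isTheta (hf : HasRpowOrder f r) (s : ℝ) :
    (fun x => f x ^ s) =Θ[𝓝[>] 0] fun x => x ^ (r * s) := by
  have hpos : ∀ᶠ x : ℝ in 𝓝[>] 0, 0 < x := self_mem_nhdsWithin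
  refine (hf.isTheta.rpow (r := s) (hf.eventually_pos.mono fun _ h => h.le)
    (hpos.mono fun _ h => Real.rpow_nonneg h.le r)).trans_eventuallyEq ?_
  exact hpos.mono fun x hx => (Real.rpow_mul hx.le r s).symm

theorem tendsto_nhdsGT_zero (hf : HasRpowOrder f r) (hr : 0 < r) :
    Tendsto f (𝓝[>] 0) (𝓝[>] 0) :=
  tendsto_nhdsWithin_iff.2
    ⟨hf.isTheta.1.trans_tendsto (tendsto_rpow_nhdsGT_zero hr), hf.eventually_pos⟩

theorem comp (hf : HasRpowOrder f s) (hg : HasRpowOrder g r) (hr : 0 < r) :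
    HasRpowOrder (f ∘ g) (r * s) := by
  have hg_lim := hg.tendsto_nhdsGT_zero hr
  refine of_isTheta ((hg_lim.eventually hf.eventually_pos).mono fun _ h => h.le) ?_
  exact IsTheta.trans ⟨hf.isTheta.1.comp_tendsto hg_lim, hf.isTheta.2.comp_tendsto hg_lim⟩
    (hg.rpow_isTheta s)

theorem of_comp (hg : HasRpowOrder g r) (hr : r ≠ 0) (hfg : HasRpowOrder (f ∘ g) s)
    (hmap : 𝓝[>] 0 ≤ map g (𝓝[>] 0)) : HasRpowOrder f (s / r) := by
  have hΘ : (f ∘ g) =Θ[𝓝[>] 0] fun x => g x ^ (s / r) := by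
    have := hg.rpow_isTheta (s / r)
    rw [mul_div_cancel₀ s hr] at this
    exact hfg.isTheta.trans this.symm
  exact of_isTheta (hmap (mem_map.2 (hfg.eventually_pos.mono fun _ h => h.le)))
    ⟨(isBigO_map.2 hΘ.1).mono hmap, (isBigO_map.2 hΘ.2).mono hmap⟩

end HasRpowOrder

section Substitution

theorem tendsto_one_sub_sq_nhdsGT_zero : Tendsto (fun η : ℝ => (1 - η) ^ 2) (𝓝[>] 0) (𝓝 1) := by
  have : ContinuousAt (fun η : ℝ => (1 - η) ^ 2) 0 := by fun_prop
  simpa using this.tendsto.mono_left nhdsWithin_le_nhds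

theorem hasDerivAt_one_sub_exp_neg (y : ℝ) :
    HasDerivAt (fun y : ℝ => 1 - Real.exp (-y)) (Real.exp (-y)) y := by
  simpa using (hasDerivAt_neg y).exp.const_sub 1

theorem hasRpowOrder_one_sub_exp_neg : HasRpowOrder (fun y => 1 - Real.exp (-y)) 1 := by
  refine HasRpowOrder.of_isTheta ?_ ?_
  · filter_upwards [self_mem_nhdsWithin] with y hy
    simpa using (mem_Ioi.1 hy).le
  · have h := hasDerivAt_iff_tendsto_slope.1 (hasDerivAt_one_sub_exp_neg 0)
    simp only [neg_zero, Real.exp_zero] at h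
    refine (isTheta_of_div_tendsto_nhds_ne_zero (c := (1 : ℝ)) ?_ one_ne_zero).symm
    refine (h.mono_left (nhdsGT_le_nhdsNE 0)).congr fun y => ?_
    simp [slope_def_field]

end Substitution

section NhdsGT

theorem eventually_nhdsGT_forall_Ioc {a : ℝ} {p : ℝ → Prop} (h : ∀ᶠ x in 𝓝[>] a, p x) :
    ∀ᶠ b in 𝓝[>] a, ∀ x ∈ Ioc a b, p x := by
  obtain ⟨c, hc, hp⟩ := mem_nhdsGT_iff_exists_Ioo_subset.1 h
  filter_upwards [Ioo_mem_nhdsGT hc] with b hb x hx using hp ⟨hx.1, hx.2.trans_lt hb.2⟩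

theorem eventually_nhdsGT_eventually_nhds {a : ℝ} {p : ℝ → Prop} (h : ∀ᶠ x in 𝓝[>] a, p x) :
    ∀ᶠ x in 𝓝[>] a, ∀ᶠ y in 𝓝 x, p y := by
  filter_upwards [eventually_eventually_nhdsWithin.2 h, self_mem_nhdsWithin] with x hx hax
  rwa [isOpen_Ioi.nhdsWithin_eq hax] at hx

end NhdsGT

section Inverse

theorem nhdsGT_le_map_of_strictMonoOn {f : ℝ → ℝ} {a b : ℝ} (hab : a < b)
    (hf : ContinuousOn f (Icc a b)) (hmono : StrictMonoOn f (Icc a b)) :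
    𝓝[>] (f a) ≤ map f (𝓝[>] a) := by
  intro s hs
  obtain ⟨c, hc, hcs⟩ := (mem_nhdsGT_iff_exists_mem_Ioc_Ioo_subset hab).1 hs
  have hac : Icc a c ⊆ Icc a b := Icc_subset_Icc_right hc.2
  refine mem_of_superset (Ioo_mem_nhdsGT
    (hmono (left_mem_Icc.2 hab.le) (hac (right_mem_Icc.2 hc.1.le)) hc.1)) ?_
  exact (intermediate_value_Ioo hc.1.le (hf.mono hac)).trans (image_subset_iff.2 hcs)

theorem nhds_le_map_of_strictMonoOn {f : ℝ → ℝ} {a b x : ℝ} (hx : x ∈ Ioo a b)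
    (hf : ContinuousOn f (Icc a b)) (hmono : StrictMonoOn f (Icc a b)) :
    𝓝 (f x) ≤ map f (𝓝 x) := by
  intro s hs
  obtain ⟨c, d, ⟨hcx, hxd⟩, hcd⟩ := mem_nhds_iff_exists_Ioo_subset.1
    (inter_mem hs (Ioo_mem_nhds hx.1 hx.2))
  obtain ⟨hcds, hcdab⟩ := subset_inter_iff.1 hcd
  obtain ⟨hac, hdb⟩ := (Ioo_subset_Ioo_iff (hcx.trans hxd)).1 hcdab
  have hIcc : Icc c d ⊆ Icc a b := Icc_subset_Icc hac hdb
  have hxIcc : x ∈ Icc a b := Ioo_subset_Icc_self hx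
  have hcd' : c ≤ d := (hcx.trans hxd).le
  refine mem_of_superset (Ioo_mem_nhds (hmono (hIcc (left_mem_Icc.2 hcd')) hxIcc hcx)
    (hmono hxIcc (hIcc (right_mem_Icc.2 hcd')) hxd)) ?_
  exact (intermediate_value_Ioo hcd' (hf.mono hIcc)).trans (image_subset_iff.2 hcds)

theorem exists_strictMonoOn_Icc_of_hasDerivAt_pos {f f' : ℝ → ℝ} {a : ℝ}
    (hcont : ContinuousWithinAt f (Ioi a) a) (hf : ∀ᶠ x in 𝓝[>] a, HasDerivAt f (f' x) x)
    (hf' : ∀ᶠ x in 𝓝[>] a, 0 < f' x) :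
    ∃ b > a, ContinuousOn f (Icc a b) ∧ StrictMonoOn f (Icc a b) := by
  obtain ⟨c, hac, hc⟩ := mem_nhdsGT_iff_exists_Ioc_subset.1 (hf.and hf')
  have hcontOn : ContinuousOn f (Icc a c) := by
    intro x hx
    rcases hx.1.eq_or_lt with rfl | hax
    · exact (continuousWithinAt_Ioi_iff_Ici.1 hcont).mono Icc_subset_Ici_self
    · exact (hc ⟨hax, hx.2⟩).1.continuousAt.continuousWithinAt
  refine ⟨c, hac, hcontOn, strictMonoOn_of_deriv_pos (convex_Icc a c) hcontOn fun x hx => ?_⟩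
  rw [interior_Icc] at hx
  obtain ⟨hderiv, hpos⟩ := hc (Ioo_subset_Ioc_self hx)
  rwa [hderiv.deriv]

theorem hasDerivAt_of_comp_eventuallyEq {P g h : ℝ → ℝ} {g' h' y : ℝ} (hg : HasDerivAt g g' y)
    (hg' : g' ≠ 0) (hh : HasDerivAt h h' y) (hopen : 𝓝 (g y) ≤ map g (𝓝 y))
    (hP : P ∘ g =ᶠ[𝓝 y] h) : HasDerivAt P (h' / g') (g y) := by
  have hopen' : 𝓝[≠] (g y) ≤ map g (𝓝[≠] y) :=
    calc 𝓝[≠] (g y) ≤ map g (𝓝 y) ⊓ 𝓟 {g y}ᶜ := inf_le_inf_right _ hopen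
      _ = map g (𝓝[g ⁻¹' {g y}ᶜ] y) := map_inf_principal_preimage.symm
      _ ≤ map g (𝓝[≠] y) := map_mono (nhdsWithin_mono y fun _ hz hzy => hz (congrArg g hzy))
  rw [hasDerivAt_iff_tendsto_slope] at hg hh ⊢
  refine Tendsto.mono_left (tendsto_map'_iff.2 ?_) hopen'
  refine (hh.div hg hg').congr' ?_
  filter_upwards [self_mem_nhdsWithin, hP.filter_mono nhdsWithin_le_nhds] with z hz hPz
  simp only [Pi.div_apply, slope_def_field, Function.comp_apply] at hPz ⊢
  have hPy : P (g y) = h y := hP.self_of_nhds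
  rw [hPy, hPz, div_div_div_cancel_right₀ (sub_ne_zero.2 hz)]

theorem eventually_hasDerivAt_of_comp_eventuallyEq {P g g' h h' : ℝ → ℝ} {a b : ℝ} (hab : a < b)
    (hcont : ContinuousOn g (Icc a b)) (hmono : StrictMonoOn g (Icc a b))
    (hg : ∀ᶠ y in 𝓝[>] a, HasDerivAt g (g' y) y) (hg' : ∀ᶠ y in 𝓝[>] a, g' y ≠ 0)
    (hh : ∀ᶠ y in 𝓝[>] a, HasDerivAt h (h' y) y) (hP : P ∘ g =ᶠ[𝓝[>] a] h) :
    ∀ᶠ y in 𝓝[>] a, HasDerivAt P (h' y / g' y) (g y) := by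
  filter_upwards [hg, hg', hh, eventually_nhdsGT_eventually_nhds hP, Ioo_mem_nhdsGT hab] with
    y hg hg' hh hP hy
  exact hasDerivAt_of_comp_eventuallyEq hg hg' hh (nhds_le_map_of_strictMonoOn hy hcont hmono) hP

theorem hasRpowOrder_of_comp_eventuallyEq {P g g' h h' : ℝ → ℝ} {q r : ℝ} (hq : 0 < q)
    (hg0 : g 0 = 0) (hg : ∀ᶠ y in 𝓝[>] 0, HasDerivAt g (g' y) y)
    (hh : ∀ᶠ y in 𝓝[>] 0, HasDerivAt h (h' y) y) (hgq : HasRpowOrder g q)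
    (hg'q : HasRpowOrder g' (q - 1)) (hhr : HasRpowOrder h r) (hh'r : HasRpowOrder h' (r - 1))
    (hP : P ∘ g =ᶠ[𝓝[>] 0] h) :
    HasRpowOrder P (r / q) ∧ HasRpowOrder (deriv P) (r / q - 1) := by
  have hcont : ContinuousWithinAt g (Ioi 0) 0 := by
    rw [ContinuousWithinAt, hg0]
    exact (hgq.tendsto_nhdsGT_zero hq).mono_right nhdsWithin_le_nhds
  obtain ⟨b, hb, hcontOn, hmono⟩ :=
    exists_strictMonoOn_Icc_of_hasDerivAt_pos hcont hg hg'q.eventually_pos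
  have hmap : 𝓝[>] 0 ≤ map g (𝓝[>] 0) := by
    simpa only [hg0] using nhdsGT_le_map_of_strictMonoOn hb hcontOn hmono
  have hderiv : deriv P ∘ g =ᶠ[𝓝[>] 0] fun y => h' y / g' y :=
    (eventually_hasDerivAt_of_comp_eventuallyEq hb hcontOn hmono hg
      (hg'q.eventually_pos.mono fun _ h => h.ne') hh hP).mono fun _ h => h.deriv
  have hquot : HasRpowOrder (fun y => h' y / g' y) (r - q) := by
    simpa only [sub_sub_sub_cancel_right] using hh'r.div hg'q
  rw [← div_sub_same hq.ne']
  exact ⟨hgq.of_comp hq.ne' (hhr.congr' hP.symm) hmap,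
    hgq.of_comp hq.ne' (hquot.congr' hderiv.symm) hmap⟩

end Inverse

section Integrability

theorem intervalIntegrable_abs_sub_rpow {r : ℝ} (hr : -1 < r) (c a b : ℝ) :
    IntervalIntegrable (fun x => |c - x| ^ r) volume a b := by
  have h_nonneg : ∀ d : ℝ, 0 ≤ d → IntervalIntegrable (fun x => |x| ^ r) volume 0 d := by
    intro d hd
    refine (intervalIntegral.intervalIntegrable_rpow' hr).congr fun x hx => ?_
    rw [uIoc_of_le hd] at hx
    simp only [abs_of_pos hx.1]
  have h_zero : ∀ d : ℝ, IntervalIntegrable (fun x => |x| ^ r) volume 0 d := by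
    intro d
    rcases le_total 0 d with hd | hd
    · exact h_nonneg d hd
    · simpa using (IntervalIntegrable.iff_comp_neg).1 (h_nonneg (-d) (neg_nonneg.2 hd))
  simpa using ((h_zero (c - a)).symm.trans (h_zero (c - b))).comp_sub_left c

theorem intervalIntegrable_rpow_mul_abs_sub_rpow {r s b c : ℝ} (hr : -1 < r) (hs : -1 < s)
    (hb : 0 < b) (hc : 0 < c) :
    IntervalIntegrable (fun x => x ^ r * |c - x| ^ s) volume 0 b := by
  have hleft : IntervalIntegrable (fun x => x ^ r * |c - x| ^ s) volume 0 (c / 2) := by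
    refine (intervalIntegral.intervalIntegrable_rpow' hr).mul_continuousOn
      (ContinuousOn.rpow_const (by fun_prop) fun x hx => Or.inl ?_)
    rw [uIcc_of_le (half_pos hc).le] at hx
    exact abs_ne_zero.2 (by linarith [hx.2])
  have hright : IntervalIntegrable (fun x => x ^ r * |c - x| ^ s) volume (c / 2) b := by
    refine (intervalIntegrable_abs_sub_rpow hs c _ _).continuousOn_mul
      (ContinuousOn.rpow_const (by fun_prop) fun x hx => Or.inl ?_)
    exact ((lt_min (half_pos hc) hb).trans_le hx.1).ne'
  exact hleft.trans hright

theorem integral_rpow_mul_sub_rpow {r s c : ℝ} (hc : 0 < c) :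
    ∫ x in (0 : ℝ)..c, x ^ r * (c - x) ^ s =
      (∫ t in (0 : ℝ)..1, t ^ r * (1 - t) ^ s) * c ^ (r + s + 1) := by
  have hscale := intervalIntegral.mul_integral_comp_mul_left (a := 0) (b := 1)
    (f := fun x => x ^ r * (c - x) ^ s) c
  rw [mul_zero, mul_one] at hscale
  rw [← hscale, Real.rpow_add hc, Real.rpow_one, mul_comm _ (c ^ (r + s) * c), mul_comm _ c,
    mul_assoc, ← intervalIntegral.integral_const_mul (c ^ (r + s))]
  congr 1
  refine intervalIntegral.integral_congr fun t ht => ?_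
  rw [uIcc_of_le zero_le_one] at ht
  have hct : c - c * t = c * (1 - t) := by ring
  simp only [hct, Real.mul_rpow hc.le ht.1, Real.mul_rpow hc.le (sub_nonneg.2 ht.2),
    Real.rpow_add hc]
  ring

theorem integral_rpow_mul_one_sub_rpow_pos {r s : ℝ} (hr : -1 < r) (hs : -1 < s) :
    0 < ∫ t in (0 : ℝ)..1, t ^ r * (1 - t) ^ s := by
  refine intervalIntegral.intervalIntegral_pos_of_pos_on ?_ (fun t ht =>
    mul_pos (Real.rpow_pos_of_pos ht.1 r) (Real.rpow_pos_of_pos (sub_pos.2 ht.2) s)) zero_lt_one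
  refine (intervalIntegrable_rpow_mul_abs_sub_rpow hr hs zero_lt_one zero_lt_one).congr ?_
  intro t ht
  rw [uIoc_of_le zero_le_one] at ht
  simp only [abs_of_nonneg (sub_nonneg.2 ht.2)]

end Integrability

section SqrtIntegral

theorem abs_sqrt_sub_sqrt_mul_sqrt_abs_le (x y : ℝ) : |√y - √x| * √|x| ≤ |y - x| := by
  rcases le_total x 0 with hx | hx
  · rw [Real.sqrt_eq_zero_of_nonpos hx, sub_zero, abs_of_nonneg (Real.sqrt_nonneg y),
      abs_of_nonpos hx]
    rcases le_total y 0 with hy | hy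
    · simp [Real.sqrt_eq_zero_of_nonpos hy]
    · rw [abs_of_nonneg (by linarith)]
      nlinarith [two_mul_le_add_sq √y √(-x), Real.sq_sqrt hy, Real.sq_sqrt (neg_nonneg.2 hx)]
  · rw [abs_of_nonneg hx]
    rcases le_total y 0 with hy | hy
    · rw [Real.sqrt_eq_zero_of_nonpos hy, zero_sub, abs_neg, abs_of_nonneg (Real.sqrt_nonneg x),
        Real.mul_self_sqrt hx, abs_of_nonpos (by linarith)]
      linarith
    · calc |√y - √x| * √x ≤ |√y - √x| * (√y + √x) := by
            gcongr
            exact le_add_of_nonneg_left (Real.sqrt_nonneg y)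
        _ = |y - x| := by
            rw [← abs_of_nonneg (by positivity : 0 ≤ √y + √x), ← abs_mul, mul_comm, ← sq_sub_sq,
              Real.sq_sqrt hy, Real.sq_sqrt hx]

theorem hasDerivAt_integral_of_dominated_loc_of_lip' {α 𝕜 E : Type*} [MeasurableSpace α]
    {μ : Measure α} [RCLike 𝕜] [NormedAddCommGroup E] [NormedSpace ℝ E] [NormedSpace 𝕜 E]
    [CompleteSpace E] {F : 𝕜 → α → E} {F' : α → E} {x₀ : 𝕜} {s : Set 𝕜} {bound : α → ℝ}
    (hs : s ∈ 𝓝 x₀) (hF_meas : ∀ x ∈ s, AEStronglyMeasurable (F x) μ)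
    (hF_int : Integrable (F x₀) μ) (hF'_meas : AEStronglyMeasurable F' μ)
    (h_lipsch : ∀ᵐ a ∂μ, ∀ x ∈ s, ‖F x a - F x₀ a‖ ≤ bound a * ‖x - x₀‖)
    (bound_integrable : Integrable bound μ) (h_diff : ∀ᵐ a ∂μ, HasDerivAt (F · a) (F' a) x₀) :
    HasDerivAt (fun x => ∫ a, F x a ∂μ) (∫ a, F' a ∂μ) x₀ := by
  set L : E →L[𝕜] 𝕜 →L[𝕜] E := ContinuousLinearMap.smulRightL 𝕜 𝕜 E 1
  have hL_meas : AEStronglyMeasurable (L ∘ F') μ := L.continuous.comp_aestronglyMeasurable hF'_meas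
  obtain ⟨hL_int, hL⟩ := hasFDerivAt_integral_of_dominated_loc_of_lip' hs hF_meas hF_int hL_meas
    h_lipsch bound_integrable (h_diff.mono fun _ h => h.hasFDerivAt)
  have hF'_int : Integrable F' μ := by
    rw [← integrable_norm_iff hL_meas] at hL_int
    simpa [L, Function.comp_def, integrable_norm_iff hF'_meas] using! hL_int
  rw [hasDerivAt_iff_hasFDerivAt]
  simpa only [Function.comp_def, ContinuousLinearMap.integral_comp_comm _ hF'_int] using! hL

theorem hasDerivAt_integral_mul_sqrt_sub {α : Type*} [MeasurableSpace α] {μ : Measure α}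
    {φ w : α → ℝ} {u : ℝ} (hφ : AEMeasurable φ μ) (hw : AEMeasurable w μ)
    (hne : ∀ᵐ x ∂μ, w x ≠ u) (hsqrt : Integrable (fun x => φ x * √(w x - u)) μ)
    (hinv : Integrable (fun x => φ x / √|w x - u|) μ) :
    HasDerivAt (fun v => ∫ x, φ x * √(w x - v) ∂μ) (∫ x, -(φ x / (2 * √(w x - u))) ∂μ) u := by
  have hderiv : ∀ᵐ x ∂μ, HasDerivAt (fun v => φ x * √(w x - v))
      (-(φ x / (2 * √(w x - u)))) u := by
    filter_upwards [hne] with x hx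
    exact ((((hasDerivAt_id' u).const_sub (w x)).sqrt (sub_ne_zero.2 hx)).const_mul
      (φ x)).congr_deriv (by ring)
  have hlip : ∀ᵐ x ∂μ, ∀ v ∈ univ, ‖φ x * √(w x - v) - φ x * √(w x - u)‖
      ≤ ‖φ x / √|w x - u|‖ * ‖v - u‖ := by
    filter_upwards [hne] with x hx v _
    have hpos : 0 < √|w x - u| := Real.sqrt_pos.2 (abs_pos.2 (sub_ne_zero.2 hx))
    have hsub := abs_sqrt_sub_sqrt_mul_sqrt_abs_le (w x - u) (w x - v)
    rw [sub_sub_sub_cancel_left, abs_sub_comm u v] at hsub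
    rw [← mul_sub, norm_mul, norm_div, Real.norm_of_nonneg hpos.le, div_mul_eq_mul_div,
      mul_div_assoc]
    exact mul_le_mul_of_nonneg_left ((le_div_iff₀ hpos).2 hsub) (norm_nonneg _)
  exact hasDerivAt_integral_of_dominated_loc_of_lip' univ_mem (fun v _ => by fun_prop) hsqrt
    (hφ.div (by fun_prop)).neg.aestronglyMeasurable hlip hinv.norm hderiv

end SqrtIntegral

/-- The transform `δ ↦ ∫₀^δ φ(η) ((1 - η)² - (1 - δ)²)^p dη`, an Abel-type fractional integral of
`φ`; under `δ = 1 - e^{-y}` it carries the integrals defining `g` and `h`. -/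
def abelIntegral (φ : ℝ → ℝ) (p δ : ℝ) : ℝ :=
  ∫ η in (0 : ℝ)..δ, φ η * ((1 - η) ^ 2 - (1 - δ) ^ 2) ^ p

section AbelIntegral

variable {φ : ℝ → ℝ} {k p : ℝ}

theorem one_sub_sq_sub_one_sub_sq (η δ : ℝ) :
    (1 - η) ^ 2 - (1 - δ) ^ 2 = (δ - η) * (2 - δ - η) := by
  ring

theorem abelKernel_nonneg {η δ : ℝ} (hη : η ≤ δ) (hδ : δ ≤ 1) :
    0 ≤ (1 - η) ^ 2 - (1 - δ) ^ 2 := by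
  rw [one_sub_sq_sub_one_sub_sq]
  exact mul_nonneg (by linarith) (by linarith)

theorem intervalIntegrable_mul_abs_abelKernel_rpow {b C δ : ℝ} (hφ : Measurable φ) (hk : -1 < k)
    (hp : -1 < p) (hb : b ∈ Ioo 0 1) (hC : ∀ η ∈ Ioc 0 b, |φ η| ≤ C * η ^ k) (hδ : δ ∈ Ioc 0 1) :
    IntervalIntegrable (fun η => φ η * |(1 - η) ^ 2 - (1 - δ) ^ 2| ^ p) volume 0 b := by
  have hpos : ∀ η ≤ b, 0 < 2 - δ - η := fun η hη => by linarith [hb.2, hδ.2]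
  have hmaj : IntervalIntegrable
      (fun η => η ^ k * |δ - η| ^ p * (2 - δ - η) ^ p) volume 0 b := by
    refine (intervalIntegrable_rpow_mul_abs_sub_rpow hk hp hb.1 hδ.1).mul_continuousOn
      (ContinuousOn.rpow_const (by fun_prop) fun η hη => Or.inl ?_)
    rw [uIcc_of_le hb.1.le] at hη
    exact (hpos η hη.2).ne'
  refine (hmaj.const_mul C).mono_fun' (by fun_prop) ?_
  rw [uIoc_of_le hb.1.le]
  filter_upwards [ae_restrict_mem measurableSet_Ioc] with η hη
  rw [one_sub_sq_sub_one_sub_sq, abs_mul, abs_of_pos (hpos η hη.2),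
    Real.mul_rpow (abs_nonneg _) (hpos η hη.2).le, norm_mul, Real.norm_eq_abs,
    Real.norm_of_nonneg (by have := hpos η hη.2; positivity), mul_assoc, ← mul_assoc C]
  have := hpos η hη.2
  gcongr
  exact hC η hη

theorem eventually_forall_abs_le_of_isBigO_rpow (hφ : φ =O[𝓝[>] 0] fun η => η ^ k) :
    ∃ C, ∀ᶠ b in 𝓝[>] 0, ∀ η ∈ Ioc 0 b, |φ η| ≤ C * η ^ k := by
  obtain ⟨C, hC⟩ := hφ.bound
  refine ⟨C, eventually_nhdsGT_forall_Ioc ?_⟩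
  filter_upwards [hC, self_mem_nhdsWithin] with η hη (hpos : 0 < η)
  rwa [Real.norm_eq_abs, Real.norm_of_nonneg (Real.rpow_nonneg hpos.le k)] at hη

theorem eventually_intervalIntegrable_abelKernel (hmeas : Measurable φ) (hk : -1 < k) (hp : -1 < p)
    (hφ : φ =O[𝓝[>] 0] fun η => η ^ k) :
    ∀ᶠ δ in 𝓝[>] 0,
      IntervalIntegrable (fun η => φ η * ((1 - η) ^ 2 - (1 - δ) ^ 2) ^ p) volume 0 δ := by
  obtain ⟨C, hC⟩ := eventually_forall_abs_le_of_isBigO_rpow hφ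
  filter_upwards [hC, Ioo_mem_nhdsGT zero_lt_one] with δ hC hδ
  refine (intervalIntegrable_mul_abs_abelKernel_rpow hmeas hk hp hδ hC
    (Ioo_subset_Ioc_self hδ)).congr fun η hη => ?_
  rw [uIoc_of_le hδ.1.le] at hη
  simp only [abs_of_nonneg (abelKernel_nonneg hη.2 hδ.2.le)]

theorem rpow_bounds_of_mem_Icc {b x : ℝ} (hx : x ∈ Icc 1 b) (p : ℝ) :
    b ^ (-|p|) ≤ x ^ p ∧ x ^ p ≤ b ^ |p| := by
  have hpos : 0 < x := zero_lt_one.trans_le hx.1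
  constructor
  · exact (Real.rpow_le_rpow_of_nonpos hpos hx.2 (neg_nonpos.2 (abs_nonneg p))).trans
      (Real.rpow_le_rpow_of_exponent_le hx.1 (neg_abs_le p))
  · exact (Real.rpow_le_rpow_of_exponent_le hx.1 (le_abs_self p)).trans
      (Real.rpow_le_rpow hpos.le hx.2 (abs_nonneg p))

theorem abelKernel_rpow_bounds {δ η : ℝ} (hδ : δ ≤ 1 / 2) (hη : η ∈ Ioo 0 δ) (p : ℝ) :
    2 ^ (-|p|) * (δ - η) ^ p ≤ ((1 - η) ^ 2 - (1 - δ) ^ 2) ^ p ∧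
      ((1 - η) ^ 2 - (1 - δ) ^ 2) ^ p ≤ 2 ^ |p| * (δ - η) ^ p := by
  have hpos : 0 ≤ δ - η := sub_nonneg.2 hη.2.le
  have hmem : 2 - δ - η ∈ Icc 1 2 := ⟨by linarith [hη.2], by linarith [hη.1, hη.2]⟩
  have hbounds := rpow_bounds_of_mem_Icc hmem p
  rw [one_sub_sq_sub_one_sub_sq, mul_comm (δ - η),
    Real.mul_rpow (zero_le_one.trans hmem.1) hpos]
  have := Real.rpow_nonneg hpos p
  exact ⟨by gcongr; exact hbounds.1, by gcongr; exact hbounds.2⟩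

theorem abelIntegral_bounds {m M δ : ℝ} (hk : -1 < k) (hp : -1 < p) (hm : 0 ≤ m)
    (hδ : δ ∈ Ioc 0 (1 / 2))
    (hint : IntervalIntegrable (fun η => φ η * ((1 - η) ^ 2 - (1 - δ) ^ 2) ^ p) volume 0 δ)
    (hφ : ∀ η ∈ Ioc 0 δ, m * η ^ k ≤ φ η ∧ φ η ≤ M * η ^ k) :
    m * 2 ^ (-|p|) * (∫ t in (0 : ℝ)..1, t ^ k * (1 - t) ^ p) * δ ^ (k + p + 1)
        ≤ abelIntegral φ p δ ∧
      abelIntegral φ p δ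
        ≤ M * 2 ^ |p| * (∫ t in (0 : ℝ)..1, t ^ k * (1 - t) ^ p) * δ ^ (k + p + 1) := by
  have hbeta : IntervalIntegrable (fun η => η ^ k * (δ - η) ^ p) volume 0 δ := by
    refine (intervalIntegrable_rpow_mul_abs_sub_rpow hk hp hδ.1 hδ.1).congr fun η hη => ?_
    rw [uIoc_of_le hδ.1.le] at hη
    simp only [abs_of_nonneg (sub_nonneg.2 hη.2)]
  have hconst : ∀ c, c * (∫ t in (0 : ℝ)..1, t ^ k * (1 - t) ^ p) * δ ^ (k + p + 1) =
      ∫ η in (0 : ℝ)..δ, c * (η ^ k * (δ - η) ^ p) := fun c => by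
    rw [intervalIntegral.integral_const_mul, integral_rpow_mul_sub_rpow hδ.1, mul_assoc]
  have hpointwise : ∀ η ∈ Ioo 0 δ,
      m * 2 ^ (-|p|) * (η ^ k * (δ - η) ^ p) ≤ φ η * ((1 - η) ^ 2 - (1 - δ) ^ 2) ^ p ∧
        φ η * ((1 - η) ^ 2 - (1 - δ) ^ 2) ^ p ≤ M * 2 ^ |p| * (η ^ k * (δ - η) ^ p) := by
    intro η hη
    obtain ⟨hφ_low, hφ_up⟩ := hφ η (Ioo_subset_Ioc_self hη)
    obtain ⟨hker_low, hker_up⟩ := abelKernel_rpow_bounds hδ.2 hη p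
    have hφ_nonneg : 0 ≤ φ η := (mul_nonneg hm (Real.rpow_nonneg hη.1.le k)).trans hφ_low
    have hδη : 0 ≤ (δ - η) ^ p := Real.rpow_nonneg (sub_nonneg.2 hη.2.le) p
    rw [mul_mul_mul_comm m, mul_mul_mul_comm M]
    exact ⟨mul_le_mul hφ_low hker_low (by positivity) hφ_nonneg,
      mul_le_mul hφ_up hker_up (le_trans (by positivity) hker_low) (hφ_nonneg.trans hφ_up)⟩
  rw [hconst, hconst]
  exact ⟨intervalIntegral.integral_mono_on_of_le_Ioo hδ.1.le (hbeta.const_mul _) hint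
      fun η hη => (hpointwise η hη).1,
    intervalIntegral.integral_mono_on_of_le_Ioo hδ.1.le hint (hbeta.const_mul _)
      fun η hη => (hpointwise η hη).2⟩

theorem HasRpowOrder.abelIntegral (hφ : HasRpowOrder φ k) (hmeas : Measurable φ) (hk : -1 < k)
    (hp : -1 < p) : HasRpowOrder (abelIntegral φ p) (k + p + 1) := by
  have hint := eventually_intervalIntegrable_abelKernel hmeas hk hp hφ.isTheta.1
  obtain ⟨m, hm, M, hM, hbounds⟩ := hφ
  have hbeta := integral_rpow_mul_one_sub_rpow_pos hk hp
  refine ⟨_, mul_pos (mul_pos hm (Real.rpow_pos_of_pos two_pos (-|p|))) hbeta,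
    _, mul_pos (mul_pos hM (Real.rpow_pos_of_pos two_pos |p|)) hbeta, ?_⟩
  filter_upwards [eventually_nhdsGT_forall_Ioc hbounds, hint, Ioc_mem_nhdsGT one_half_pos] with
    δ hφδ hint hδ
  exact abelIntegral_bounds hk hp hm.le hδ hint hφδ

theorem eventually_abelIntegral_add_one (hmeas : Measurable φ) (hk : -1 < k) (hp : -1 < p)
    (hφ : φ =O[𝓝[>] 0] fun η => η ^ k) :
    ∀ᶠ δ in 𝓝[>] 0, abelIntegral φ (p + 1) δ =
      abelIntegral (fun η => φ η * (1 - η) ^ 2) p δ - (1 - δ) ^ 2 * abelIntegral φ p δ := by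
  filter_upwards [eventually_intervalIntegrable_abelKernel hmeas hk hp hφ,
    Ioo_mem_nhdsGT zero_lt_one] with δ hint hδ
  have hint' := hint.mul_continuousOn (g := fun η => (1 - η) ^ 2) (by fun_prop)
  rw [abelIntegral, abelIntegral, abelIntegral, ← intervalIntegral.integral_const_mul]
  rw [← intervalIntegral.integral_sub (hint'.congr fun η _ => by ring) (hint.const_mul _)]
  refine intervalIntegral.integral_congr fun η hη => ?_
  rw [uIcc_of_le hδ.1.le] at hη
  simp only [Real.rpow_add_one' (abelKernel_nonneg hη.2 hδ.2.le) (by linarith : p + 1 ≠ 0)]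
  ring

theorem integral_eq_integral_of_forall_Ioc_eq_zero {E : Type*} [NormedAddCommGroup E]
    [NormedSpace ℝ E] {μ : Measure ℝ} {f : ℝ → E} {a b c : ℝ} (hab : a ≤ b) (hbc : b ≤ c)
    (hf : ∀ x ∈ Ioc b c, f x = 0) : ∫ x in a..c, f x ∂μ = ∫ x in a..b, f x ∂μ := by
  rw [intervalIntegral.integral_of_le (hab.trans hbc), intervalIntegral.integral_of_le hab]
  exact setIntegral_eq_of_subset_of_forall_sdiff_eq_zero measurableSet_Ioc
    (Ioc_subset_Ioc_right hbc) fun x ⟨hx, hx'⟩ =>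
      hf x ⟨not_le.1 fun hxb => hx' ⟨hx.1, hxb⟩, hx.2⟩

theorem abelIntegral_eq_integral_comp {F : ℝ → ℝ} {b δ : ℝ} (hδ : 0 ≤ δ) (hδb : δ ≤ b)
    (hb : b ≤ 1) (hF : ∀ x, 0 ≤ x → F x = x ^ p) (hF0 : ∀ x, x ≤ 0 → F x = 0) :
    abelIntegral φ p δ = ∫ η in (0 : ℝ)..b, φ η * F ((1 - η) ^ 2 - (1 - δ) ^ 2) := by
  rw [integral_eq_integral_of_forall_Ioc_eq_zero hδ hδb fun η hη => ?_]
  · refine intervalIntegral.integral_congr fun η hη => ?_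
    rw [uIcc_of_le hδ] at hη
    simp only [hF _ (abelKernel_nonneg hη.2 (hδb.trans hb))]
  · rw [hF0, mul_zero]
    rw [← neg_nonneg, neg_sub]
    exact abelKernel_nonneg hη.1.le (hη.2.trans hb)

theorem hasDerivAt_one_sub_sq (x : ℝ) :
    HasDerivAt (fun x : ℝ => (1 - x) ^ 2) (-2 * (1 - x)) x :=
  (((hasDerivAt_id' x).const_sub 1).pow 2).congr_deriv (by norm_num)

theorem hasDerivAt_abelIntegral_half {b C δ : ℝ} (hmeas : Measurable φ) (hk : -1 < k)
    (hb : b < 1) (hδ : δ ∈ Ioo 0 b) (hφ : ∀ η ∈ Ioc 0 b, |φ η| ≤ C * η ^ k) :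
    HasDerivAt (abelIntegral φ (1 / 2)) ((1 - δ) * abelIntegral φ (-(1 / 2)) δ) δ := by
  have hb0 : 0 < b := hδ.1.trans hδ.2
  have hδ' : δ ∈ Ioc 0 1 := ⟨hδ.1, (hδ.2.trans hb).le⟩
  have hint : ∀ p : ℝ, -1 < p →
      IntegrableOn (fun η => φ η * |(1 - η) ^ 2 - (1 - δ) ^ 2| ^ p) (Ioc 0 b) := fun p hp =>
    (intervalIntegrable_mul_abs_abelKernel_rpow hmeas hk hp ⟨hb0, hb⟩ hφ hδ').1
  have hne : ∀ᵐ η ∂volume.restrict (Ioc 0 b), (1 - η) ^ 2 ≠ (1 - δ) ^ 2 := by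
    filter_upwards [ae_restrict_mem measurableSet_Ioc, Measure.ae_ne _ δ] with η hη hηδ
    rw [ne_eq, ← sub_eq_zero, one_sub_sq_sub_one_sub_sq, mul_eq_zero, not_or]
    exact ⟨sub_ne_zero.2 hηδ.symm, by linarith [hη.2, hδ.2]⟩
  have hsqrt : IntegrableOn (fun η => φ η * √((1 - η) ^ 2 - (1 - δ) ^ 2)) (Ioc 0 b) := by
    refine Integrable.mono (hint (1 / 2) (by norm_num)) (by fun_prop)
      (Eventually.of_forall fun η => ?_)
    rw [← Real.sqrt_eq_rpow, norm_mul, norm_mul]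
    gcongr
    rw [Real.norm_of_nonneg (Real.sqrt_nonneg _), Real.norm_of_nonneg (Real.sqrt_nonneg _)]
    exact Real.sqrt_le_sqrt (le_abs_self _)
  have hinv : IntegrableOn (fun η => φ η / √|(1 - η) ^ 2 - (1 - δ) ^ 2|) (Ioc 0 b) := by
    refine (hint (-(1 / 2)) (by norm_num)).congr (Eventually.of_forall fun η => ?_)
    simp only [Real.rpow_neg (abs_nonneg _), Real.sqrt_eq_rpow, div_eq_mul_inv]
  have hderiv := (hasDerivAt_integral_mul_sqrt_sub hmeas.aemeasurable
    (by fun_prop) hne hsqrt hinv).comp δ (hasDerivAt_one_sub_sq δ)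
  -- As `√` vanishes on negative reals, the upper limit can be frozen at `b`: only the integrand
  -- depends on `δ`.
  refine (hderiv.congr_of_eventuallyEq ?_).congr_deriv ?_
  · filter_upwards [Ioo_mem_nhds hδ.1 hδ.2] with δ' hδ'
    rw [abelIntegral_eq_integral_comp hδ'.1.le hδ'.2.le hb.le (fun x _ => Real.sqrt_eq_rpow x)
      fun x hx => Real.sqrt_eq_zero_of_nonpos hx, intervalIntegral.integral_of_le hb0.le]
    rfl
  · rw [abelIntegral_eq_integral_comp (F := fun x => (√x)⁻¹) hδ.1.le hδ.2.le hb.le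
      (fun x hx => by rw [Real.rpow_neg hx, Real.sqrt_eq_rpow])
      fun x hx => by rw [Real.sqrt_eq_zero_of_nonpos hx, inv_zero],
      intervalIntegral.integral_of_le hb0.le, ← integral_mul_const, ← integral_const_mul]
    refine integral_congr_ae (Eventually.of_forall fun η => ?_)
    simp only
    ring

theorem eventually_hasDerivAt_abelIntegral_half (hmeas : Measurable φ) (hk : -1 < k)
    (hφ : φ =O[𝓝[>] 0] fun η => η ^ k) :
    ∀ᶠ δ in 𝓝[>] 0,
      HasDerivAt (abelIntegral φ (1 / 2)) ((1 - δ) * abelIntegral φ (-(1 / 2)) δ) δ := by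
  obtain ⟨C, hC⟩ := eventually_forall_abs_le_of_isBigO_rpow hφ
  obtain ⟨b, hCb, hb⟩ := (hC.and (Ioo_mem_nhdsGT zero_lt_one)).exists
  filter_upwards [Ioo_mem_nhdsGT hb.1] with δ hδ
  exact hasDerivAt_abelIntegral_half hmeas hk hb.2 hδ hCb

theorem eventually_hasDerivAt_abelIntegral_three_halves (hmeas : Measurable φ) (hk : -1 < k)
    (hφ : φ =O[𝓝[>] 0] fun η => η ^ k) :
    ∀ᶠ δ in 𝓝[>] 0,
      HasDerivAt (abelIntegral φ (3 / 2)) (3 * ((1 - δ) * abelIntegral φ (1 / 2) δ)) δ := by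
  have hmeas' : Measurable fun η => φ η * (1 - η) ^ 2 := by fun_prop
  have hrec : ∀ p : ℝ, -1 < p → ∀ᶠ δ in 𝓝[>] 0, abelIntegral φ (p + 1) δ =
      abelIntegral (fun η => φ η * (1 - η) ^ 2) p δ - (1 - δ) ^ 2 * abelIntegral φ p δ :=
    fun p hp => eventually_abelIntegral_add_one hmeas hk hp hφ
  have hφ' : (fun η => φ η * (1 - η) ^ 2) =O[𝓝[>] 0] fun η => η ^ k := by
    simpa only [mul_one] using hφ.mul (tendsto_one_sub_sq_nhdsGT_zero.isBigO_one ℝ)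
  filter_upwards [eventually_nhdsGT_eventually_nhds (hrec (1 / 2) (by norm_num)),
    hrec (-(1 / 2)) (by norm_num), eventually_hasDerivAt_abelIntegral_half hmeas hk hφ,
    eventually_hasDerivAt_abelIntegral_half hmeas' hk hφ'] with δ hthree hone hd hd'
  norm_num only at hthree hone
  refine ((hd'.sub ((hasDerivAt_one_sub_sq δ).mul hd)).congr_of_eventuallyEq hthree).congr_deriv ?_
  rw [hone]
  ring

end AbelIntegral

/-- The Abel transform in the variable `y = -log (1 - δ)`, with the weight `e^{ay}`: up to
constants, `gfun Φ` and `hfun Φ` are of this form with `a = 4`. -/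
def expAbelIntegral (φ : ℝ → ℝ) (p a y : ℝ) : ℝ :=
  Real.exp (a * y) * abelIntegral φ p (1 - Real.exp (-y))

section ExpAbelIntegral

variable {φ : ℝ → ℝ} {k p q c : ℝ}

theorem HasRpowOrder.expAbelIntegral (hφ : HasRpowOrder φ k) (hmeas : Measurable φ) (hk : -1 < k)
    (hp : -1 < p) (a : ℝ) :
    HasRpowOrder (expAbelIntegral φ p a) (k + p + 1) := by
  have hexp : Tendsto (fun y => Real.exp (a * y)) (𝓝[>] 0) (𝓝 1) := by
    have : ContinuousAt (fun y : ℝ => Real.exp (a * y)) 0 := by fun_prop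
    simpa using this.tendsto.mono_left nhdsWithin_le_nhds
  have hcomp := (hφ.abelIntegral hmeas hk hp).comp hasRpowOrder_one_sub_exp_neg one_pos
  rw [one_mul] at hcomp
  exact hcomp.mul_of_tendsto one_pos hexp

theorem eventually_hasDerivAt_expAbelIntegral (a : ℝ)
    (hA : ∀ᶠ δ in 𝓝[>] 0,
      HasDerivAt (abelIntegral φ q) (c * ((1 - δ) * abelIntegral φ p δ)) δ) :
    ∀ᶠ y in 𝓝[>] 0, HasDerivAt (expAbelIntegral φ q a)
      (a * expAbelIntegral φ q a y + c * expAbelIntegral φ p (a - 2) y) y := by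
  have hδ := hasRpowOrder_one_sub_exp_neg.tendsto_nhdsGT_zero one_pos
  filter_upwards [hδ.eventually hA] with y hy
  refine (((hasDerivAt_id' y).const_mul a).exp.mul
    (hy.comp y (hasDerivAt_one_sub_exp_neg y))).congr_deriv ?_
  have hexp : Real.exp (a * y) * Real.exp (-y) ^ 2 = Real.exp ((a - 2) * y) := by
    rw [← Real.exp_nat_mul, ← Real.exp_add]
    push_cast
    ring_nf
  simp only [expAbelIntegral, ← hexp, Function.comp_apply]
  ring

theorem exists_hasDerivAt_and_hasRpowOrder {F : ℝ → ℝ} {a C : ℝ} (hφ : HasRpowOrder φ k)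
    (hmeas : Measurable φ) (hk : -1 < k) (hp : -1 < p) (hpq : p < q) (ha : 0 < a)
    (hC : 0 < C) (hc : 0 < c)
    (hA : ∀ᶠ δ in 𝓝[>] 0,
      HasDerivAt (abelIntegral φ q) (c * ((1 - δ) * abelIntegral φ p δ)) δ)
    (hF : ∀ y > 0, F y = C * expAbelIntegral φ q a y) :
    HasRpowOrder F (k + q + 1) ∧
      ∃ F', (∀ᶠ y in 𝓝[>] 0, HasDerivAt F (F' y) y) ∧ HasRpowOrder F' (k + p + 1) := by
  have hE_high := hφ.expAbelIntegral hmeas hk (hp.trans hpq)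
  have hE_low := hφ.expAbelIntegral hmeas hk hp (a - 2)
  refine ⟨((hE_high a).const_mul hC).congr' ?_, _, ?_,
    (((hE_high a).const_mul ha).add (hE_low.const_mul hc) (by linarith)).const_mul hC⟩
  · filter_upwards [self_mem_nhdsWithin] with y hy using (hF y hy).symm
  · filter_upwards [eventually_hasDerivAt_expAbelIntegral a hA, self_mem_nhdsWithin] with y hE hy
    refine (hE.const_mul C).congr_of_eventuallyEq ?_
    filter_upwards [Ioi_mem_nhds hy] with z hz using hF z hz

end ExpAbelIntegral

section EquationOfState

variable {Φ : ℝ → ℝ} {k : ℝ}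

theorem one_sub_one_sub_exp_neg_sq (y : ℝ) :
    (1 - (1 - Real.exp (-y))) ^ 2 = Real.exp (-2 * y) := by
  rw [sub_sub_cancel, ← Real.exp_nat_mul]
  push_cast
  ring_nf

theorem gfun_eq_expAbelIntegral (Φ : ℝ → ℝ) {y : ℝ} (hy : 0 < y) :
    gfun Φ y = 4 * Real.pi * expAbelIntegral (fun η => Φ η * (1 - η) ^ 2) (1 / 2) 4 y := by
  simp only [gfun, if_neg hy.not_ge, expAbelIntegral, abelIntegral, one_sub_one_sub_exp_neg_sq,
    Real.sqrt_eq_rpow, mul_assoc]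

theorem hfun_eq_expAbelIntegral (Φ : ℝ → ℝ) {y : ℝ} (hy : 0 < y) :
    hfun Φ y = 4 * Real.pi / 3 * expAbelIntegral Φ (3 / 2) 4 y := by
  have hδ : 0 ≤ 1 - Real.exp (-y) := by simpa using hy.le
  rw [hfun, if_neg hy.not_ge, expAbelIntegral, abelIntegral, mul_assoc]
  congr 2
  refine intervalIntegral.integral_congr fun η hη => ?_
  rw [uIcc_of_le hδ] at hη
  have hker := abelKernel_nonneg hη.2 (sub_le_self 1 (Real.exp_pos (-y)).le)
  rw [one_sub_one_sub_exp_neg_sq] at hker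
  simp only [one_sub_one_sub_exp_neg_sq, Real.sqrt_eq_rpow, ← Real.rpow_mul_natCast hker]
  norm_num

theorem hasRpowOrder_gfun_and_hasDerivAt (hΦ : HasRpowOrder Φ k) (hmeas : Measurable Φ)
    (hk : -1 < k) :
    HasRpowOrder (gfun Φ) (k + 3 / 2) ∧
      ∃ g', (∀ᶠ y in 𝓝[>] 0, HasDerivAt (gfun Φ) (g' y) y) ∧ HasRpowOrder g' (k + 1 / 2) := by
  have hΦ' : HasRpowOrder (fun η => Φ η * (1 - η) ^ 2) k := by
    simpa only [mul_comm] using hΦ.mul_of_tendsto one_pos tendsto_one_sub_sq_nhdsGT_zero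
  have hmeas' : Measurable fun η => Φ η * (1 - η) ^ 2 := by fun_prop
  have hA := eventually_hasDerivAt_abelIntegral_half hmeas' hk hΦ'.isTheta.1
  obtain ⟨hg, g', hg', hg'_order⟩ := exists_hasDerivAt_and_hasRpowOrder (p := -(1 / 2))
    hΦ' hmeas' hk (by norm_num) (by norm_num) four_pos (by positivity : 0 < 4 * Real.pi) one_pos
    (by simpa only [one_mul] using hA) fun y hy => gfun_eq_expAbelIntegral Φ hy
  exact ⟨by convert hg using 1; ring, g', hg', by convert hg'_order using 1; ring⟩

theorem hasRpowOrder_hfun_and_hasDerivAt (hΦ : HasRpowOrder Φ k) (hmeas : Measurable Φ)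
    (hk : -1 < k) :
    HasRpowOrder (hfun Φ) (k + 5 / 2) ∧
      ∃ h', (∀ᶠ y in 𝓝[>] 0, HasDerivAt (hfun Φ) (h' y) y) ∧ HasRpowOrder h' (k + 3 / 2) := by
  obtain ⟨hh, h', hh', hh'_order⟩ := exists_hasDerivAt_and_hasRpowOrder hΦ hmeas hk
    (by norm_num) (by norm_num) four_pos (by positivity : 0 < 4 * Real.pi / 3) three_pos
    (eventually_hasDerivAt_abelIntegral_three_halves hmeas hk hΦ.isTheta.1)
    fun y hy => hfun_eq_expAbelIntegral Φ hy
  exact ⟨by convert hh using 1; ring, h', hh', by convert hh'_order using 1; ring⟩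

theorem hasRpowOrder_equationOfState {P : ℝ → ℝ} (hΦ : HasRpowOrder Φ k) (hmeas : Measurable Φ)
    (hk : -1 < k) (hP : P ∘ gfun Φ =ᶠ[𝓝[>] 0] hfun Φ) :
    HasRpowOrder P (1 / (k + 3 / 2) + 1) ∧ HasRpowOrder (deriv P) (1 / (k + 3 / 2)) := by
  obtain ⟨hg_order, g', hg, hg'_order⟩ := hasRpowOrder_gfun_and_hasDerivAt hΦ hmeas hk
  obtain ⟨hh_order, h', hh, hh'_order⟩ := hasRpowOrder_hfun_and_hasDerivAt hΦ hmeas hk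
  have hq : 0 < k + 3 / 2 := by linarith
  have hexp : 1 / (k + 3 / 2) + 1 = (k + 5 / 2) / (k + 3 / 2) := by
    rw [div_add_one hq.ne']
    ring
  rw [eq_sub_of_add_eq hexp, sub_add_cancel]
  exact hasRpowOrder_of_comp_eventuallyEq hq (if_pos le_rfl : gfun Φ 0 = 0) hg hh hg_order
    (by convert hg'_order using 1; ring) hh_order (by convert hh'_order using 1; ring) hP

theorem stmt13_general (Φ : ℝ → ℝ) (k c₁ c₂ η₀ : ℝ) (hk : -1 < k) (hc₁ : 0 < c₁) (hη₀ : 0 < η₀)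
    (hΦmeas : Measurable Φ)
    (hΦasymp : ∀ η ∈ Ioo 0 η₀, c₁ * η ^ k ≤ Φ η ∧ Φ η ≤ c₂ * η ^ k)
    (P : ℝ → ℝ) (hP : ∀ᶠ y in 𝓝[>] 0, P (gfun Φ y) = hfun Φ y) :
    ∃ d₁ d₂ : ℝ, 0 < d₁ ∧ 0 < d₂ ∧ ∃ ρ₀ : ℝ, 0 < ρ₀ ∧
      ∀ ρ ∈ Ioo 0 ρ₀,
        d₁ * ρ ^ (1 / (k + 3 / 2)) ≤ deriv P ρ ∧
        deriv P ρ ≤ d₂ * ρ ^ (1 / (k + 3 / 2)) ∧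
        d₁ * ρ ^ (1 / (k + 3 / 2) + 1) ≤ P ρ ∧
        P ρ ≤ d₂ * ρ ^ (1 / (k + 3 / 2) + 1) := by
  have hΦ : HasRpowOrder Φ k := by
    refine ⟨c₁, hc₁, max c₁ c₂, lt_max_of_lt_left hc₁, ?_⟩
    filter_upwards [Ioo_mem_nhdsGT hη₀] with η hη
    exact ⟨(hΦasymp η hη).1, (hΦasymp η hη).2.trans
      (mul_le_mul_of_nonneg_right (le_max_right c₁ c₂) (Real.rpow_nonneg hη.1.le k))⟩
  obtain ⟨⟨a₁, ha₁, a₂, ha₂, hP_bounds⟩, b₁, hb₁, b₂, _, hP'_bounds⟩ :=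
    hasRpowOrder_equationOfState hΦ hΦmeas hk hP
  obtain ⟨ρ₀, hρ₀, hbounds⟩ := mem_nhdsGT_iff_exists_Ioo_subset.1 (hP_bounds.and hP'_bounds)
  refine ⟨min a₁ b₁, max a₂ b₂, lt_min ha₁ hb₁, lt_max_of_lt_left ha₂, ρ₀, hρ₀, fun ρ hρ => ?_⟩
  obtain ⟨⟨hP_low, hP_up⟩, hP'_low, hP'_up⟩ := hbounds hρ
  have hpow : ∀ s : ℝ, 0 ≤ ρ ^ s := Real.rpow_nonneg hρ.1.le
  exact ⟨(mul_le_mul_of_nonneg_right (min_le_right _ _) (hpow _)).trans hP'_low,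
    hP'_up.trans (mul_le_mul_of_nonneg_right (le_max_right _ _) (hpow _)),
    (mul_le_mul_of_nonneg_right (min_le_left _ _) (hpow _)).trans hP_low,
    hP_up.trans (mul_le_mul_of_nonneg_right (le_max_left _ _) (hpow _))⟩

end EquationOfState

end

/-- Under (Φ1) with exponent `k ∈ (−1/2, 3/2)` and with
`γ := 1/(k + 3/2) ∈ (1/3, 1)`, the induced equation of state `P = h ∘ g⁻¹` satisfies
`d₁ ρ^γ ≤ P′(ρ) ≤ d₂ ρ^γ` and `d₁ ρ^{γ+1} ≤ P(ρ) ≤ d₂ ρ^{γ+1}` for small `ρ > 0`; in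
particular `P′(ρ) ≤ c ρ^{1/n}` with `n = k + 3/2 ∈ (1, 3)`. -/
theorem stmt13 (Φ : ℝ → ℝ) (k c₁ c₂ η₀ : ℝ)
    (hk : k ∈ Set.Ioo (-(1/2) : ℝ) (3/2))
    (hc₁ : 0 < c₁) (hc₂ : 0 < c₂) (hη₀ : 0 < η₀)
    (hΦmeas : Measurable Φ)
    (hΦnonneg : ∀ η : ℝ, 0 ≤ Φ η)
    (hΦzero : ∀ η : ℝ, η ≤ 0 → Φ η = 0)
    (hΦloc : ∀ a : ℝ, 0 < a → ∃ M : ℝ, ∀ η ∈ Set.Icc (0:ℝ) a, Φ η ≤ M)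
    (hΦasymp : ∀ η ∈ Set.Ioo (0:ℝ) η₀, c₁ * η ^ k ≤ Φ η ∧ Φ η ≤ c₂ * η ^ k)
    (P : ℝ → ℝ)
    (hP : ∀ y : ℝ, 0 ≤ y → P (gfun Φ y) = hfun Φ y) :
    (1 / (k + 3/2) ∈ Set.Ioo (1/3 : ℝ) 1) ∧
    (k + 3/2 ∈ Set.Ioo (1 : ℝ) 3) ∧
    ∃ d₁ d₂ : ℝ, 0 < d₁ ∧ 0 < d₂ ∧ ∃ ρ₀ : ℝ, 0 < ρ₀ ∧
      ∀ ρ ∈ Set.Ioo (0:ℝ) ρ₀,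
        d₁ * ρ ^ (1 / (k + 3/2)) ≤ deriv P ρ ∧
        deriv P ρ ≤ d₂ * ρ ^ (1 / (k + 3/2)) ∧
        d₁ * ρ ^ (1 / (k + 3/2) + 1) ≤ P ρ ∧
        P ρ ≤ d₂ * ρ ^ (1 / (k + 3/2) + 1) := by
  have hq : 1 < k + 3 / 2 ∧ k + 3 / 2 < 3 := ⟨by linarith [hk.1], by linarith [hk.2]⟩
  have hpos : 0 < k + 3 / 2 := one_pos.trans hq.1
  exact ⟨⟨one_div_lt_one_div_of_lt hpos hq.2, (div_lt_one hpos).2 hq.1⟩, hq,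
    stmt13_general Φ k c₁ c₂ η₀ (by linarith [hk.1]) hc₁ hη₀ hΦmeas hΦasymp P
      (eventually_mem_nhdsWithin.mono fun y hy => hP y (le_of_lt hy))⟩

end
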